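/- For m = 2p even and V = {2s} with 1 ≤ s ≤ p, the sequence of Hankel determinants of the generating function D for Dyck paths avoiding peak heights congruent to 2s mod m begins with s ones and is then partitioned into consecutive blocks of length p, where the j-th block (a_{j,1}, ..., a_{j,p}) is an arithmetic progression with common difference d_j, with a_{1,1} = 0, d_1 = -1, a_{j,1} = d_{j-1}, and d_j = d_{j-1} - a_{j-1,p} for j ≥ 2. -/

import Mathlib

/-- Height of a lattice path (given by up/down indicators `p`) after `k` steps. -/
def pathHeight (p : ℕ → Bool) (k : ℕ) : ℤ :=
  ∑ i ∈ Finset.range k, (if p i then (1 : ℤ) else -1)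

/-- The number of Dyck paths of semilength `n` (paths of `2n` steps `(1,1)`/`(1,-1)`
from `(0,0)` to `(2n,0)` staying weakly above the x-axis) none of whose peaks has
height in the set `S`.  A peak is an up-step immediately followed by a down-step;
its height is the y-coordinate of its apex. -/
noncomputable def dyckCount (S : ℕ → Prop) (n : ℕ) : ℕ :=
  Nat.card {p : ℕ → Bool //
    (∀ i, 2 * n ≤ i → p i = false) ∧
    (∀ k, k ≤ 2 * n → 0 ≤ pathHeight p k) ∧
    pathHeight p (2 * n) = 0 ∧
    (∀ i, i + 1 < 2 * n → p i = true → p (i + 1) = false →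
      ¬ S (pathHeight p (i + 1)).toNat) }

/-! If only even peak heights are forbidden, recording every second height of a Dyck path turns the
count `dₙ` into a weighted count of Motzkin paths which return to level `0` only at their end. Hence
`dₙ = e₀ᵀ J (P J)ⁿ e₀`, where `J` is the tridiagonal matrix with off-diagonal entries `1` whose
diagonal `c` is `1` at `0` and at each `k > 0` with `2 * k` forbidden, and `2` elsewhere, and where
`P` deletes coordinate `0`. As `(J P)ⁱ J (P J)ʲ = J (P J)ⁱ⁺ʲ`, the Hankel matrix is `A J Aᵀ`, with
the vectors `(P J)ⁱ e₀` as rows of `A`, and `A` is lower unitriangular. So the Hankel determinants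
are the leading principal minors `Tₙ` of `J`, for which `Tₙ₊₂ = cₙ₊₁ Tₙ₊₁ - Tₙ`: they run in
arithmetic progression as long as `c` is `2`, and each `1` on the diagonal starts a new block. -/

section JacobiMatrix

variable {R : Type*} [CommRing R]

theorem det_eq_mul_of_last_column_eq_zero {n : ℕ} (M : Matrix (Fin (n + 1)) (Fin (n + 1)) R)
    (hM : ∀ i : Fin n, M i.castSucc (Fin.last n) = 0) :
    M.det = M (Fin.last n) (Fin.last n) * (M.submatrix Fin.castSucc Fin.castSucc).det := by
  rw [Matrix.det_succ_column M (Fin.last n), Fin.sum_univ_castSucc]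
  simp [hM, ← two_mul]

/-- The leading `n × n` block of the infinite Jacobi (symmetric tridiagonal) matrix with diagonal
`c` and off-diagonal entries `1`. -/
def jacobiMatrix (c : ℕ → R) (n : ℕ) : Matrix (Fin n) (Fin n) R :=
  Matrix.of fun i j =>
    if i = j then c i else if (i : ℕ) + 1 = j ∨ (j : ℕ) + 1 = i then 1 else 0

variable (c : ℕ → R)

theorem jacobiMatrix_apply_eq_zero {n : ℕ} {i j : Fin n}
    (h : (i : ℕ) + 1 < j ∨ (j : ℕ) + 1 < i) : jacobiMatrix c n i j = 0 := by
  rw [jacobiMatrix, Matrix.of_apply, if_neg (by omega), if_neg (by omega)]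

theorem det_jacobiMatrix_one : (jacobiMatrix c 1).det = c 0 := by
  simp [jacobiMatrix]

theorem jacobiMatrix_submatrix_castSucc (n : ℕ) :
    (jacobiMatrix c (n + 1)).submatrix Fin.castSucc Fin.castSucc = jacobiMatrix c n := by
  ext i j
  simp [jacobiMatrix]

theorem det_jacobiMatrix_add_two (n : ℕ) :
    (jacobiMatrix c (n + 2)).det =
      c (n + 1) * (jacobiMatrix c (n + 1)).det - (jacobiMatrix c n).det := by
  set J := jacobiMatrix c (n + 2) with hJ
  let skip : Fin (n + 1) → Fin (n + 2) := (Fin.last n).castSucc.succAbove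
  have skip_last : skip (Fin.last n) = Fin.last (n + 1) := by simp [skip]
  have skip_castSucc (j : Fin n) : skip j.castSucc = j.castSucc.castSucc :=
    Fin.succAbove_of_castSucc_lt _ _ (by simp [Fin.lt_def])
  have last_row (j : Fin n) : J (Fin.last (n + 1)) j.castSucc.castSucc = 0 :=
    jacobiMatrix_apply_eq_zero c (by simp)
  have last_column (i : Fin n) : J i.castSucc.castSucc (Fin.last (n + 1)) = 0 :=
    jacobiMatrix_apply_eq_zero c (by simp)
  have minor : (J.submatrix Fin.castSucc skip).det = (jacobiMatrix c n).det := by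
    rw [det_eq_mul_of_last_column_eq_zero _ fun i => by simpa [skip_last] using last_column i,
      ← jacobiMatrix_submatrix_castSucc c n, ← jacobiMatrix_submatrix_castSucc c (n + 1)]
    simp [hJ, jacobiMatrix, skip_last, skip_castSucc, Matrix.submatrix]
  have sign_off : (-1 : R) ^ (n + 1 + n) = -1 := Odd.neg_one_pow ⟨n, by ring⟩
  have sign_diag : (-1 : R) ^ (n + 1 + (n + 1)) = 1 := Even.neg_one_pow ⟨n + 1, rfl⟩
  have entry_off : J (Fin.last (n + 1)) (Fin.last n).castSucc = 1 := by
    simp [hJ, jacobiMatrix, Fin.ext_iff]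
  have entry_diag : J (Fin.last (n + 1)) (Fin.last (n + 1)) = c (n + 1) := by
    simp [hJ, jacobiMatrix]
  rw [Matrix.det_succ_row J (Fin.last (n + 1)), Fin.sum_univ_castSucc, Fin.sum_univ_castSucc,
    Finset.sum_eq_zero fun j _ => by rw [last_row, mul_zero, zero_mul], entry_off, entry_diag,
    Fin.succAbove_last, jacobiMatrix_submatrix_castSucc, minor]
  simp only [Fin.val_last, Fin.val_castSucc, sign_off, sign_diag]
  ring

variable {c} in
theorem det_jacobiMatrix_sub_of_eq_two {m k : ℕ} (hk : ∀ i < k, c (m + i + 1) = 2) :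
    (jacobiMatrix c (m + k + 1)).det - (jacobiMatrix c (m + k)).det =
      (jacobiMatrix c (m + 1)).det - (jacobiMatrix c m).det := by
  induction k with
  | zero => rfl
  | succ k ih =>
    rw [← ih fun i hi => hk i (by omega), ← add_assoc, det_jacobiMatrix_add_two,
      hk k (by omega)]
    ring

end JacobiMatrix

section HankelMatrix

variable {R : Type*} [CommRing R] (c : ℕ → R)

/-- The action on sequences of the infinite Jacobi matrix with diagonal `c` and off-diagonal
entries `1`. -/
def jacobiOp (y : ℕ → R) : ℕ → R
  | 0 => c 0 * y 0 + y 1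
  | k + 1 => y k + c (k + 1) * y (k + 1) + y (k + 2)

/-- The total weight of the Motzkin paths with `n` steps from level `0` to level `k` that do not
return to level `0`, where a horizontal step at level `i` has weight `c i` and the other steps have
weight `1`. -/
def motzkinWeight : ℕ → ℕ → R
  | 0, k => if k = 0 then 1 else 0
  | _ + 1, 0 => 0
  | n + 1, k + 1 => jacobiOp c (motzkinWeight n) (k + 1)

/-- The total weight of the Motzkin paths with `n + 1` steps whose only return to level `0` is their
end, for the weights of `motzkinWeight`. -/
def firstReturnWeight (n : ℕ) : R :=
  jacobiOp c (motzkinWeight c n) 0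

theorem motzkinWeight_eq_zero_of_lt {n k : ℕ} (h : n < k) : motzkinWeight c n k = 0 := by
  induction n generalizing k with
  | zero => simp [motzkinWeight, h.ne']
  | succ n ih =>
    obtain ⟨k, rfl⟩ := Nat.exists_eq_add_one_of_ne_zero (Nat.ne_zero_of_lt h)
    simp [motzkinWeight, jacobiOp, ih (show n < k by omega), ih (show n < k + 1 by omega),
      ih (show n < k + 2 by omega)]

theorem motzkinWeight_self (n : ℕ) : motzkinWeight c n n = 1 := by
  induction n with
  | zero => simp [motzkinWeight]
  | succ n ih =>
    simp [motzkinWeight, jacobiOp, ih, motzkinWeight_eq_zero_of_lt c (show n < n + 1 by omega),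
      motzkinWeight_eq_zero_of_lt c (show n < n + 2 by omega)]

theorem sum_mul_jacobiOp_sub_mul_jacobiOp (x y : ℕ → R) (N : ℕ) :
    ∑ k ∈ Finset.range (N + 1), (x k * jacobiOp c y k - y k * jacobiOp c x k) =
      x N * y (N + 1) - y N * x (N + 1) := by
  induction N with
  | zero => simp only [zero_add, Finset.sum_range_one, jacobiOp]; ring
  | succ N ih => rw [Finset.sum_range_succ, ih]; simp only [jacobiOp]; ring

theorem sum_mul_jacobiOp_comm {x y : ℕ → R} {N : ℕ} (hx : x (N + 1) = 0) (hy : y (N + 1) = 0) :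
    ∑ k ∈ Finset.range (N + 1), x k * jacobiOp c y k =
      ∑ k ∈ Finset.range (N + 1), y k * jacobiOp c x k := by
  rw [← sub_eq_zero, ← Finset.sum_sub_distrib, sum_mul_jacobiOp_sub_mul_jacobiOp, hx, hy]
  ring

theorem sum_motzkinWeight_succ_mul (n N : ℕ) (z : ℕ → R) :
    ∑ k ∈ Finset.range (N + 1), motzkinWeight c (n + 1) k * z k =
      ∑ k ∈ Finset.range N, jacobiOp c (motzkinWeight c n) (k + 1) * z (k + 1) := by
  simp [Finset.sum_range_succ', motzkinWeight]

-- With `vᵢ = motzkinWeight c i` and `J` symmetric, both sides are `∑ k > 0, (J vᵢ) k * (J vⱼ) k`.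
theorem sum_motzkinWeight_succ_mul_jacobiOp {i j N : ℕ} (hi : i ≤ N) (hj : j < N) :
    ∑ k ∈ Finset.range (N + 1), motzkinWeight c (i + 1) k * jacobiOp c (motzkinWeight c j) k =
      ∑ k ∈ Finset.range (N + 1),
        motzkinWeight c i k * jacobiOp c (motzkinWeight c (j + 1)) k := by
  rw [sum_mul_jacobiOp_comm c (x := motzkinWeight c i) (motzkinWeight_eq_zero_of_lt c (by omega))
      (motzkinWeight_eq_zero_of_lt c (by omega)),
    sum_motzkinWeight_succ_mul, sum_motzkinWeight_succ_mul]
  exact Finset.sum_congr rfl fun k _ => mul_comm _ _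

theorem sum_motzkinWeight_mul_jacobiOp_of_add_le {i j N : ℕ} (h : i + j ≤ N) :
    ∑ k ∈ Finset.range (N + 1), motzkinWeight c i k * jacobiOp c (motzkinWeight c j) k =
      firstReturnWeight c (i + j) := by
  induction i generalizing j with
  | zero => simp [motzkinWeight, firstReturnWeight]
  | succ i ih =>
    rw [sum_motzkinWeight_succ_mul_jacobiOp c (by omega) (by omega), ih (by omega),
      ← Nat.add_assoc, Nat.add_right_comm]

theorem sum_motzkinWeight_mul_jacobiOp {i N : ℕ} (h : i < N) (j : ℕ) :
    ∑ k ∈ Finset.range N, motzkinWeight c i k * jacobiOp c (motzkinWeight c j) k =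
      firstReturnWeight c (i + j) := by
  rw [← sum_motzkinWeight_mul_jacobiOp_of_add_le c (show i + j ≤ N + j by omega)]
  refine (Finset.eventually_constant_sum (fun k hk => ?_) (by omega)).symm
  rw [motzkinWeight_eq_zero_of_lt c (by omega), zero_mul]

theorem jacobiMatrix_mulVec {n : ℕ} {y : ℕ → R} (hy : y n = 0) (i : Fin n) :
    (jacobiMatrix c n).mulVec (fun j => y j) i = jacobiOp c y i := by
  have entry_mul (k l : ℕ) :
      (if k = l then c k else if k + 1 = l ∨ l + 1 = k then 1 else 0) * y l =
        (if k = l then c k * y l else 0) + (if k + 1 = l then y l else 0) +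
          if l + 1 = k then y l else 0 := by
    split_ifs <;> first | omega | simp
  have extended (k : ℕ) (hk : k < n) :
      ∑ l ∈ Finset.range (n + 1),
        (if k = l then c k else if k + 1 = l ∨ l + 1 = k then 1 else 0) * y l =
          jacobiOp c y k := by
    simp only [entry_mul, Finset.sum_add_distrib, Finset.sum_ite_eq, Finset.mem_range]
    rw [if_pos (by omega), if_pos (by omega)]
    cases k with
    | zero => simp [jacobiOp]
    | succ k =>
      simp only [Nat.add_right_cancel_iff, Finset.sum_ite_eq', Finset.mem_range, jacobiOp]
      rw [if_pos (by omega)]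
      ring
  rw [← extended i i.2, Finset.sum_range_succ, hy, mul_zero, add_zero,
    ← Fin.sum_univ_eq_sum_range]
  simp [jacobiMatrix, Matrix.mulVec, dotProduct, Fin.ext_iff]

theorem det_hankel_firstReturnWeight (n : ℕ) :
    (Matrix.of fun i j : Fin n => firstReturnWeight c (i + j)).det = (jacobiMatrix c n).det := by
  let A : Matrix (Fin n) (Fin n) R := Matrix.of fun i k => motzkinWeight c i k
  have det_A : A.det = 1 := by
    rw [Matrix.det_of_isLowerTriangular A fun i k hik => motzkinWeight_eq_zero_of_lt c hik]
    simp [A, motzkinWeight_self]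
  have jacobi_mul (k j : Fin n) :
      (jacobiMatrix c n * A.transpose) k j = jacobiOp c (motzkinWeight c j) k :=
    jacobiMatrix_mulVec c (motzkinWeight_eq_zero_of_lt c j.2) k
  have factorization :
      (Matrix.of fun i j : Fin n => firstReturnWeight c (i + j)) =
        A * (jacobiMatrix c n * A.transpose) := by
    ext i j
    rw [Matrix.mul_apply, Matrix.of_apply, ← sum_motzkinWeight_mul_jacobiOp c i.2,
      ← Fin.sum_univ_eq_sum_range]
    simp only [jacobi_mul, A, Matrix.of_apply]
  rw [factorization, Matrix.det_mul, Matrix.det_mul, Matrix.det_transpose, det_A, one_mul, mul_one]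

end HankelMatrix

section DyckPrefixes

theorem pathHeight_succ (p : ℕ → Bool) (n : ℕ) :
    pathHeight p (n + 1) = pathHeight p n + if p n then 1 else -1 :=
  Finset.sum_range_succ _ _

theorem pathHeight_congr {p q : ℕ → Bool} {n : ℕ} (h : ∀ i < n, p i = q i) :
    pathHeight p n = pathHeight q n :=
  Finset.sum_congr rfl fun i hi => by rw [h i (Finset.mem_range.1 hi)]

/-- The first `n` steps of `p` stay weakly above the axis and contain no peak with height in `S`. -/
def IsAdmissible (S : ℕ → Prop) (n : ℕ) (p : ℕ → Bool) : Prop :=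
  (∀ k ≤ n, 0 ≤ pathHeight p k) ∧
    ∀ i, i + 1 < n → p i = true → p (i + 1) = false → ¬ S (pathHeight p (i + 1)).toNat

variable {S : ℕ → Prop} {n h : ℕ} {p q : ℕ → Bool}

theorem IsAdmissible.congr (hp : IsAdmissible S n p) (hpq : ∀ i < n, p i = q i) :
    IsAdmissible S n q := by
  have height_eq (k : ℕ) (hk : k ≤ n) : pathHeight p k = pathHeight q k :=
    pathHeight_congr fun i hi => hpq i (by omega)
  refine ⟨fun k hk => height_eq k hk ▸ hp.1 k hk, fun i hi => ?_⟩
  rw [← hpq i (by omega), ← hpq (i + 1) hi, ← height_eq (i + 1) hi.le]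
  exact hp.2 i hi

theorem isAdmissible_succ :
    IsAdmissible S (n + 1) p ↔ IsAdmissible S n p ∧ 0 ≤ pathHeight p (n + 1) ∧
      ∀ i, i + 1 = n → p i = true → p n = false → ¬ S (pathHeight p n).toNat := by
  constructor
  · rintro ⟨nonneg, peaks⟩
    refine ⟨⟨fun k hk => nonneg k (by omega), fun i hi => peaks i (by omega)⟩,
      nonneg _ le_rfl, ?_⟩
    rintro i rfl
    exact peaks i (by omega)
  · rintro ⟨⟨nonneg, peaks⟩, nonneg_last, last_peak⟩
    refine ⟨fun k hk => ?_, fun i hi => ?_⟩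
    · obtain hk | rfl := Nat.le_succ_iff.1 hk
      exacts [nonneg k hk, nonneg_last]
    · obtain hi | rfl := Nat.lt_succ_iff_lt_or_eq.1 hi
      exacts [peaks i hi, last_peak i rfl]

/-- The prefixes of Dyck paths with `n` steps that end at height `h` and have no peak with height
in `S`, continued by down-steps as in `dyckCount`. -/
def dyckPrefixes (S : ℕ → Prop) (n h : ℕ) : Set (ℕ → Bool) :=
  {p | (∀ i, n ≤ i → p i = false) ∧ IsAdmissible S n p ∧ pathHeight p n = h}

/-- The prefixes in `dyckPrefixes S n h` that do not end with a down-step. The empty prefix is one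
of them, which makes `ncard_upPrefixes_two_mul` hold without exception. -/
def upPrefixes (S : ℕ → Prop) (n h : ℕ) : Set (ℕ → Bool) :=
  {p ∈ dyckPrefixes S n h | n = 0 ∨ p (n - 1) = true}

theorem dyckCount_eq_ncard_dyckPrefixes (S : ℕ → Prop) (n : ℕ) :
    dyckCount S n = (dyckPrefixes S (2 * n) 0).ncard := by
  simp only [dyckCount, dyckPrefixes, IsAdmissible, ← Nat.card_coe_set_eq, Set.coe_ofPred,
    Nat.cast_zero, and_left_comm, and_comm]

theorem finite_dyckPrefixes (S : ℕ → Prop) (n h : ℕ) : (dyckPrefixes S n h).Finite := by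
  refine Set.Finite.of_injOn (f := fun p (i : Fin n) => p i) (Set.mapsTo_univ _ _) ?_
    Set.finite_univ
  intro p hp q hq hpq
  funext i
  obtain hi | hi := lt_or_ge i n
  · exact congrFun hpq ⟨i, hi⟩
  · rw [hp.1 i hi, hq.1 i hi]

theorem ncard_upPrefixes_add_ncard_sdiff (S : ℕ → Prop) (n h : ℕ) :
    (upPrefixes S n h).ncard + (dyckPrefixes S n h \ upPrefixes S n h).ncard =
      (dyckPrefixes S n h).ncard := by
  rw [add_comm]
  exact Set.ncard_sdiff_add_ncard_of_subset (Set.sep_subset _ _) (finite_dyckPrefixes S n h)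

theorem update_true_mem_upPrefixes (hp : p ∈ dyckPrefixes S n h) :
    Function.update p n true ∈ upPrefixes S (n + 1) (h + 1) := by
  obtain ⟨tail, admissible, height⟩ := hp
  have agree (i : ℕ) (hi : i < n) : p i = Function.update p n true i := by
    rw [Function.update_of_ne hi.ne]
  have height_succ : pathHeight (Function.update p n true) (n + 1) = (h + 1 : ℕ) := by
    rw [pathHeight_succ, ← pathHeight_congr agree, height]
    simp
  refine ⟨⟨fun i hi => ?_, ?_, height_succ⟩, by simp⟩
  · rw [Function.update_of_ne (by omega), tail i (by omega)]
  · exact isAdmissible_succ.2 ⟨admissible.congr agree, height_succ ▸ Int.natCast_nonneg _, by simp⟩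

theorem update_false_mem_dyckPrefixes (hp : p ∈ upPrefixes S (n + 1) (h + 1)) :
    Function.update p n false ∈ dyckPrefixes S n h := by
  obtain ⟨⟨tail, admissible, height⟩, last⟩ := hp
  replace last : p n = true := by simpa using last
  have agree (i : ℕ) (hi : i < n) : p i = Function.update p n false i := by
    rw [Function.update_of_ne hi.ne]
  refine ⟨fun i hi => ?_, (isAdmissible_succ.1 admissible).1.congr agree, ?_⟩
  · obtain rfl | hi := hi.eq_or_lt
    · simp
    · rw [Function.update_of_ne hi.ne', tail i hi]
  · rw [pathHeight_succ, last] at height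
    rw [← pathHeight_congr agree]
    simpa using height

theorem ncard_upPrefixes_succ_succ (S : ℕ → Prop) (n h : ℕ) :
    (upPrefixes S (n + 1) (h + 1)).ncard = (dyckPrefixes S n h).ncard := by
  have bij : Set.BijOn (fun p => Function.update p n true) (dyckPrefixes S n h)
      (upPrefixes S (n + 1) (h + 1)) := by
    refine Set.InvOn.bijOn (f' := fun p => Function.update p n false) ⟨?_, ?_⟩
      (fun p hp => update_true_mem_upPrefixes hp) fun p hp => update_false_mem_dyckPrefixes hp
    · intro p hp
      simp [hp.1 n le_rfl]
    · rintro p ⟨-, last⟩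
      have last : p n = true := by simpa using last
      simp [last]
  exact bij.ncard_eq.symm

theorem upPrefixes_succ_zero (S : ℕ → Prop) (n : ℕ) : upPrefixes S (n + 1) 0 = ∅ := by
  refine Set.eq_empty_of_forall_notMem ?_
  rintro p ⟨⟨-, admissible, height⟩, last⟩
  have last : p n = true := by simpa using last
  have nonneg := admissible.1 n (by omega)
  rw [pathHeight_succ, last, if_pos rfl, Nat.cast_zero] at height
  omega

theorem upPrefixes_zero_zero (S : ℕ → Prop) : upPrefixes S 0 0 = {fun _ => false} := by
  ext p
  simp [upPrefixes, dyckPrefixes, IsAdmissible, pathHeight, funext_iff]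

theorem upPrefixes_zero_succ (S : ℕ → Prop) (h : ℕ) : upPrefixes S 0 (h + 1) = ∅ := by
  refine Set.eq_empty_of_forall_notMem ?_
  rintro p ⟨⟨-, -, height⟩, -⟩
  exact Int.natCast_ne_zero.2 h.succ_ne_zero height.symm

-- A final down-step creates a peak of height `h + 1` exactly when it follows an up-step.
theorem mem_dyckPrefixes_succ_sdiff_upPrefixes :
    p ∈ dyckPrefixes S (n + 1) h \ upPrefixes S (n + 1) h ↔
      p ∈ dyckPrefixes S n (h + 1) ∧ (S (h + 1) → p ∉ upPrefixes S n (h + 1)) := by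
  constructor
  · rintro ⟨hp, not_up⟩
    have last : p n = false := by simpa [upPrefixes, hp] using not_up
    obtain ⟨tail, admissible, height⟩ := hp
    have height_pred : pathHeight p n = (h + 1 : ℕ) := by
      rw [pathHeight_succ, last, if_neg Bool.false_ne_true] at height
      omega
    obtain ⟨admissible, -, last_peak⟩ := isAdmissible_succ.1 admissible
    refine ⟨⟨fun i hi => ?_, admissible, height_pred⟩, ?_⟩
    · obtain rfl | hi := hi.eq_or_lt
      exacts [last, tail i hi]
    · rintro hS ⟨-, rfl | up⟩
      · exact Int.natCast_ne_zero.2 h.succ_ne_zero height_pred.symm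
      · obtain _ | n := n
        · simp [last] at up
        · exact last_peak n rfl up last (by simpa [height_pred] using hS)
  · rintro ⟨hp, not_up⟩
    obtain ⟨tail, admissible, height⟩ := id hp
    have last : p n = false := tail n le_rfl
    have height_succ : pathHeight p (n + 1) = h := by
      rw [pathHeight_succ, last, height]
      simp
    refine ⟨⟨fun i hi => tail i (by omega), isAdmissible_succ.2 ⟨admissible, ?_, ?_⟩,
      height_succ⟩, by simp [upPrefixes, last]⟩
    · exact height_succ ▸ Int.natCast_nonneg h
    · rintro i rfl up - hS
      exact not_up (by simpa [height] using hS) ⟨hp, Or.inr up⟩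

theorem dyckPrefixes_succ_sdiff_of_mem (hS : S (h + 1)) (n : ℕ) :
    dyckPrefixes S (n + 1) h \ upPrefixes S (n + 1) h =
      dyckPrefixes S n (h + 1) \ upPrefixes S n (h + 1) := by
  ext p
  rw [mem_dyckPrefixes_succ_sdiff_upPrefixes, Set.mem_sdiff]
  simp only [hS, forall_const]

theorem dyckPrefixes_succ_sdiff_of_notMem (hS : ¬ S (h + 1)) (n : ℕ) :
    dyckPrefixes S (n + 1) h \ upPrefixes S (n + 1) h = dyckPrefixes S n (h + 1) := by
  ext p
  rw [mem_dyckPrefixes_succ_sdiff_upPrefixes]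
  simp only [hS, false_imp_iff, and_true]

end DyckPrefixes

section EvenPeakHeights

open Classical in
/-- The diagonal of the Jacobi matrix, that is, the weights of the horizontal steps of Motzkin
paths, for counting Dyck paths with no peak height in `S`, where `S` contains only even numbers.
Since no peak has height `0`, it is irrelevant whether `0` is in `S`. -/
noncomputable def peakWeight (S : ℕ → Prop) : ℕ → ℤ
  | 0 => 1
  | k + 1 => if S (2 * (k + 1)) then 1 else 2

/-- The Hankel determinant `H_n` of the numbers of Dyck paths with no peak height in `S`. -/
noncomputable def dyckHankel (S : ℕ → Prop) (n : ℕ) : ℤ :=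
  (Matrix.of fun i j : Fin n => (dyckCount S ((i : ℕ) + (j : ℕ)) : ℤ)).det

variable {S : ℕ → Prop}

-- Turning a final down-step into an up-step is a bijection, as peaks of odd height are allowed.
theorem ncard_dyckPrefixes_sdiff_upPrefixes (hS : ∀ k, ¬ S (2 * k + 1)) (n k : ℕ) :
    (dyckPrefixes S n (2 * k) \ upPrefixes S n (2 * k)).ncard =
      (upPrefixes S n (2 * (k + 1))).ncard := by
  cases n with
  | zero =>
    rw [show 2 * (k + 1) = 2 * k + 1 + 1 by ring, upPrefixes_zero_succ]
    simp [upPrefixes]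
  | succ n =>
    rw [dyckPrefixes_succ_sdiff_of_notMem (hS k), ← ncard_upPrefixes_succ_succ]
    rfl

theorem ncard_dyckPrefixes_two_mul (hS : ∀ k, ¬ S (2 * k + 1)) (n k : ℕ) :
    (dyckPrefixes S n (2 * k)).ncard =
      (upPrefixes S n (2 * k)).ncard + (upPrefixes S n (2 * (k + 1))).ncard := by
  rw [← ncard_upPrefixes_add_ncard_sdiff, ncard_dyckPrefixes_sdiff_upPrefixes hS]

theorem ncard_dyckPrefixes_succ_sdiff_upPrefixes (hS : ∀ k, ¬ S (2 * k + 1)) (n k : ℕ) :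
    ((dyckPrefixes S (n + 1) (2 * k + 1) \ upPrefixes S (n + 1) (2 * k + 1)).ncard : ℤ) =
      (peakWeight S (k + 1) - 1) * (upPrefixes S n (2 * (k + 1))).ncard +
        (upPrefixes S n (2 * (k + 2))).ncard := by
  have height : 2 * k + 1 + 1 = 2 * (k + 1) := rfl
  by_cases hk : S (2 * (k + 1))
  · rw [dyckPrefixes_succ_sdiff_of_mem (h := 2 * k + 1) hk, peakWeight, if_pos hk, height,
      ncard_dyckPrefixes_sdiff_upPrefixes hS]
    ring
  · rw [dyckPrefixes_succ_sdiff_of_notMem (h := 2 * k + 1) hk, peakWeight, if_neg hk, height,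
      ncard_dyckPrefixes_two_mul hS]
    push_cast
    ring

theorem ncard_upPrefixes_add_two (hS : ∀ k, ¬ S (2 * k + 1)) (n k : ℕ) :
    ((upPrefixes S (n + 2) (2 * (k + 1))).ncard : ℤ) =
      (upPrefixes S n (2 * k)).ncard +
        peakWeight S (k + 1) * (upPrefixes S n (2 * (k + 1))).ncard +
        (upPrefixes S n (2 * (k + 2))).ncard := by
  calc
    ((upPrefixes S (n + 2) (2 * (k + 1))).ncard : ℤ)
      = (dyckPrefixes S (n + 1) (2 * k + 1)).ncard :=
        congrArg _ (ncard_upPrefixes_succ_succ S (n + 1) (2 * k + 1))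
    _ = (dyckPrefixes S n (2 * k)).ncard +
          (dyckPrefixes S (n + 1) (2 * k + 1) \ upPrefixes S (n + 1) (2 * k + 1)).ncard := by
        rw [← ncard_upPrefixes_add_ncard_sdiff S (n + 1), ncard_upPrefixes_succ_succ]
        push_cast
        rfl
    _ = _ := by
        rw [ncard_dyckPrefixes_two_mul hS, ncard_dyckPrefixes_succ_sdiff_upPrefixes hS]
        push_cast
        ring

theorem ncard_upPrefixes_two_mul (hS : ∀ k, ¬ S (2 * k + 1)) (n k : ℕ) :
    ((upPrefixes S (2 * n) (2 * k)).ncard : ℤ) = motzkinWeight (peakWeight S) n k := by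
  induction n generalizing k with
  | zero =>
    cases k with
    | zero => simp [upPrefixes_zero_zero, motzkinWeight]
    | succ k => simp [Nat.mul_succ, upPrefixes_zero_succ, motzkinWeight]
  | succ n ih =>
    cases k with
    | zero => simp [Nat.mul_succ, upPrefixes_succ_zero, motzkinWeight]
    | succ k => rw [Nat.mul_succ, ncard_upPrefixes_add_two hS, ih, ih, ih]; rfl

theorem dyckCount_eq_firstReturnWeight (hS : ∀ k, ¬ S (2 * k + 1)) (n : ℕ) :
    (dyckCount S n : ℤ) = firstReturnWeight (peakWeight S) n := by
  rw [dyckCount_eq_ncard_dyckPrefixes, ← mul_zero 2, ncard_dyckPrefixes_two_mul hS,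
    Nat.cast_add, ncard_upPrefixes_two_mul hS, ncard_upPrefixes_two_mul hS]
  simp [firstReturnWeight, jacobiOp, peakWeight]

theorem dyckHankel_eq_det_jacobiMatrix (hS : ∀ k, ¬ S (2 * k + 1)) (n : ℕ) :
    dyckHankel S n = (jacobiMatrix (peakWeight S) n).det := by
  simp only [dyckHankel, dyckCount_eq_firstReturnWeight hS, det_hankel_firstReturnWeight]

theorem dyckHankel_zero (S : ℕ → Prop) : dyckHankel S 0 = 1 :=
  Matrix.det_fin_zero

theorem dyckHankel_one (hS : ∀ k, ¬ S (2 * k + 1)) : dyckHankel S 1 = 1 := by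
  rw [dyckHankel_eq_det_jacobiMatrix hS, det_jacobiMatrix_one, peakWeight]

theorem dyckHankel_add_two (hS : ∀ k, ¬ S (2 * k + 1)) (n : ℕ) :
    dyckHankel S (n + 2) = peakWeight S (n + 1) * dyckHankel S (n + 1) - dyckHankel S n := by
  simp only [dyckHankel_eq_det_jacobiMatrix hS, det_jacobiMatrix_add_two]

theorem dyckHankel_sub_eq_of_peakWeight_eq_two (hS : ∀ k, ¬ S (2 * k + 1)) {m k : ℕ}
    (hk : ∀ i < k, peakWeight S (m + i + 1) = 2) :
    dyckHankel S (m + k + 1) - dyckHankel S (m + k) =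
      dyckHankel S (m + 1) - dyckHankel S m := by
  simp only [dyckHankel_eq_det_jacobiMatrix hS, det_jacobiMatrix_sub_of_eq_two hk]

end EvenPeakHeights

section ResidueClass

/-- The positive integers congruent to `2 * s` modulo `2 * p`: the peak heights that are forbidden
for the modulus `m = 2p` and the residue set `V = {2s}`. -/
def residueHeights (p s k : ℕ) : Prop :=
  0 < k ∧ k % (2 * p) = (2 * s) % (2 * p)

variable {p s : ℕ}

theorem not_residueHeights_odd (p s k : ℕ) : ¬ residueHeights p s (2 * k + 1) := by
  rintro ⟨-, h⟩
  have parity := congrArg (· % 2) h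
  simp only [Nat.mod_mul_right_mod] at parity
  omega

theorem residueHeights_two_mul {k : ℕ} :
    residueHeights p s (2 * k) ↔ 0 < k ∧ k ≡ s [MOD p] := by
  rw [residueHeights, Nat.mul_mod_mul_left, Nat.mul_mod_mul_left, Nat.ModEq]
  omega

theorem peakWeight_residueHeights {k : ℕ} (hk : 0 < k) :
    peakWeight (residueHeights p s) k = if k ≡ s [MOD p] then 1 else 2 := by
  obtain ⟨k, rfl⟩ := Nat.exists_eq_add_one_of_ne_zero hk.ne'
  simp only [peakWeight, residueHeights_two_mul, hk, true_and]

theorem peakWeight_residueHeights_block_start (hs : 0 < s) (j : ℕ) :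
    peakWeight (residueHeights p s) (s + j * p) = 1 := by
  rw [peakWeight_residueHeights (by omega), if_pos (by simp [Nat.ModEq])]

theorem peakWeight_residueHeights_block_interior {k : ℕ} (hk : 0 < k) (hkp : k < p) (j : ℕ) :
    peakWeight (residueHeights p s) (s + j * p + k) = 2 := by
  rw [peakWeight_residueHeights (by omega), if_neg]
  intro h
  have hk0 : s + j * p + k ≡ s + j * p + 0 [MOD p] := h.trans (by simp [Nat.ModEq])
  exact hk.ne' ((Nat.ModEq.add_left_cancel' _ hk0).eq_of_lt_of_lt hkp (by omega))

theorem peakWeight_residueHeights_of_lt {k : ℕ} (hk : 0 < k) (hks : k < s) (hsp : s ≤ p) :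
    peakWeight (residueHeights p s) k = 2 := by
  rw [peakWeight_residueHeights hk, if_neg]
  intro h
  have dvd : p ∣ s - k := (Nat.modEq_iff_dvd' hks.le).1 h
  exact absurd (Nat.le_of_dvd (by omega) dvd) (by omega)

theorem dyckHankel_residueHeights_of_le {n : ℕ} (hn : n ≤ s) (hsp : s ≤ p) :
    dyckHankel (residueHeights p s) n = 1 := by
  induction n with
  | zero => exact dyckHankel_zero _
  | succ n ih =>
    have const := dyckHankel_sub_eq_of_peakWeight_eq_two (not_residueHeights_odd p s) (m := 0)
      (k := n) fun i hi => peakWeight_residueHeights_of_lt (by omega) (by omega) hsp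
    simp only [zero_add, dyckHankel_zero, dyckHankel_one (not_residueHeights_odd p s), sub_self,
      ih (by omega)] at const
    exact sub_eq_zero.1 const

theorem dyckHankel_residueHeights_sub {k : ℕ} (hk : k < p) (j : ℕ) :
    dyckHankel (residueHeights p s) (s + j * p + k + 1) -
        dyckHankel (residueHeights p s) (s + j * p + k) =
      dyckHankel (residueHeights p s) (s + j * p + 1) -
        dyckHankel (residueHeights p s) (s + j * p) :=
  dyckHankel_sub_eq_of_peakWeight_eq_two (not_residueHeights_odd p s) fun i hi =>
    peakWeight_residueHeights_block_interior i.succ_pos (by omega) j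

theorem dyckHankel_residueHeights_block_start (hs : 0 < s) (j : ℕ) :
    dyckHankel (residueHeights p s) (s + j * p + 1) =
      dyckHankel (residueHeights p s) (s + j * p) -
        dyckHankel (residueHeights p s) (s + j * p - 1) := by
  obtain ⟨n, hn⟩ := Nat.exists_eq_add_one_of_ne_zero (show s + j * p ≠ 0 by omega)
  have weight := peakWeight_residueHeights_block_start (p := p) hs j
  rw [hn] at weight ⊢
  rw [dyckHankel_add_two (not_residueHeights_odd p s), weight, one_mul, Nat.add_sub_cancel]

theorem dyckHankel_residueHeights_next_block (hs : 0 < s) (hp : 0 < p) (j : ℕ) :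
    dyckHankel (residueHeights p s) (s + (j + 1) * p + 1) =
      dyckHankel (residueHeights p s) (s + j * p + 1) -
        dyckHankel (residueHeights p s) (s + j * p) := by
  rw [dyckHankel_residueHeights_block_start hs,
    ← dyckHankel_residueHeights_sub (Nat.sub_lt hp one_pos) j,
    show s + (j + 1) * p = s + j * p + (p - 1) + 1 by rw [add_one_mul]; omega]
  rfl

end ResidueClass

/-- Theorem: for `m = 2p` and `V = {2s}` with `1 ≤ s ≤ p`, the sequence of Hankel
determinants `H_n` of the counting sequence of Dyck paths avoiding peak heights
`≡ 2s (mod 2p)` begins with `s` ones and then splits into consecutive blocks of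
length `p`, the `j`-th block `(a_{j,0}, …, a_{j,p-1})` being an arithmetic
progression with common difference `d_j`, where `a_{0,0} = 0`, `d_0 = -1`,
`a_{j+1,0} = d_j` and `d_{j+1} = d_j - a_{j,p-1}`. -/
theorem stmt12 (p s : ℕ) (hs1 : 1 ≤ s) (hsp : s ≤ p) :
    ∃ (a : ℕ → ℕ → ℤ) (d : ℕ → ℤ),
      a 0 0 = 0 ∧ d 0 = -1 ∧
      (∀ j, a (j + 1) 0 = d j) ∧
      (∀ j, d (j + 1) = d j - a j (p - 1)) ∧
      (∀ j k, k + 1 < p → a j (k + 1) = a j k + d j) ∧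
      (∀ n, n < s →
        Matrix.det (Matrix.of fun i j : Fin (n + 1) =>
          (dyckCount (fun k => 0 < k ∧ k % (2 * p) = (2 * s) % (2 * p)) ((i : ℕ) + (j : ℕ)) : ℤ))
          = 1) ∧
      (∀ j k, k < p →
        Matrix.det (Matrix.of fun i j' : Fin (s + j * p + k + 1) =>
          (dyckCount (fun k' => 0 < k' ∧ k' % (2 * p) = (2 * s) % (2 * p)) ((i : ℕ) + (j' : ℕ)) : ℤ))
          = a j k) := by
  let H := dyckHankel (residueHeights p s)
  have ones {n : ℕ} (hn : n ≤ s) : H n = 1 := dyckHankel_residueHeights_of_le hn hsp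
  have H_succ_s : H (s + 1) = 0 := by
    simpa [dyckHankel_residueHeights_of_le, hsp] using
      dyckHankel_residueHeights_block_start (p := p) hs1 0
  have next_block (j : ℕ) : H (s + (j + 1) * p + 1) = H (s + j * p + 1) - H (s + j * p) :=
    dyckHankel_residueHeights_next_block hs1 (by omega) j
  refine ⟨fun j k => H (s + j * p + k + 1), fun j => H (s + j * p + 1) - H (s + j * p),
    by simpa using H_succ_s, by simp [H_succ_s, ones], next_block, fun j => ?_, fun j k hk => ?_,
    fun n hn => ones hn, fun j k _ => rfl⟩
  · have last : s + (j + 1) * p = s + j * p + (p - 1) + 1 := by rw [add_one_mul]; omega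
    simp only [next_block]
    rw [last]
  · exact sub_eq_iff_eq_add'.1 (dyckHankel_residueHeights_sub hk j)
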